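/- Fix an integer n ≥ 1. Let B_n ⊆ A be the ℂ-subalgebra generated by x, y, the n+2 elements x^i y^{n+1−i} v for i = 0, 1, …, n+1, and the element x^{n+1} u. Then B_n is D-stable, and for every ν ∈ ℕ the set m_ν(B_n) := D^ν(B_n ∩ ker D^{ν+1}) equals the ℂ-linear span of the monomials x^i y^j with i + j ≥ (n+2)ν, i.e. the ideal ⟨x, y⟩^{(n+2)ν} of the ring ℂ[x, y] = ker D. (This is part (1) of the main theorem: the affine extension P̂_n of SL₂ has m_ν(P̂_n) = ⟨x,y⟩^{(n+2)ν}.) -/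

import Mathlib

/-!
Give `x`, `y` weight `1` and `u`, `v` weight `-1`; this grades `A`, and `D` raises weights by `2`.
Apart from `x` and `y`, every generator of `B_n` has weight `n` and `D`-degree `1`. A product of
generators with `k` factors outside `{x, y}` therefore has `D`-degree at most `k` and weight at
least `n * k` (`Bn_le`). If `c ∈ B_n` and `D^(ν+1) c = 0`, the products with `k < ν` are killed
by `D^ν`, so `D^ν c` has weights at least `n ν + 2 ν` only. It lies in `ker D = ℂ[x, y]`
(`exists_iota_of_D_eq_zero`), where weight is degree, so all its monomials have degree at least
`(n + 2) ν` (`iota_mem_span`).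

Conversely every monomial of degree `n + 2` is `D b` for a generator `b`, and
`D^ν (b₁ ⋯ b_ν p) = ν! D b₁ ⋯ D b_ν p` for `p ∈ ℂ[x, y]` (`exists_iterate_eq`).

The kernel is computed by comparing the localizations at `x` and at `y`, and the weight is read off
from a graded map from `A` to Laurent polynomials over `ℂ(x, y)` (`theta`).
-/


open MvPolynomial

noncomputable section

/-- The ideal `⟨XV − YU − 1⟩` of `ℂ[X, Y, U, V]` (with `X = X 0`, `Y = X 1`, `U = X 2`,
`V = X 3`). -/
def sl2Ideal : Ideal (MvPolynomial (Fin 4) ℂ) :=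
  Ideal.span {X 0 * X 3 - X 1 * X 2 - 1}

/-- The coordinate ring `A = ℂ[X,Y,U,V]/⟨XV − YU − 1⟩` of `SL₂` over `ℂ`. -/
abbrev SL2R : Type := MvPolynomial (Fin 4) ℂ ⧸ sl2Ideal

/-- `x`, the image of `X` in `A`. -/
def sx : SL2R := Ideal.Quotient.mk sl2Ideal (X 0)
/-- `y`, the image of `Y` in `A`. -/
def sy : SL2R := Ideal.Quotient.mk sl2Ideal (X 1)
/-- `u`, the image of `U` in `A`. -/
def su : SL2R := Ideal.Quotient.mk sl2Ideal (X 2)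
/-- `v`, the image of `V` in `A`. -/
def sv : SL2R := Ideal.Quotient.mk sl2Ideal (X 3)

/-- The ℂ-subalgebra `B_n ⊆ A` generated by `x`, `y`, the elements `x^i y^{n+1−i} v` for
`i = 0, …, n+1`, and `x^{n+1} u`; it is the coordinate ring of the affine extension
`P̂_n` of `SL₂`. -/
def Bn (n : ℕ) : Subalgebra ℂ SL2R :=
  Algebra.adjoin ℂ ({sx, sy, sx ^ (n + 1) * su} ∪
    {w : SL2R | ∃ i ≤ n + 1, w = sx ^ i * sy ^ (n + 1 - i) * sv})

/-! ### Regular elements and the generic point -/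

/-- A variable not dividing `XV − YU − 1` is a nonzerodivisor in `A`. -/
lemma mk_X_mul_eq_zero (i : Fin 4)
    (hi : ¬ (X i : MvPolynomial (Fin 4) ℂ) ∣ X 0 * X 3 - X 1 * X 2 - 1) (a : SL2R)
    (h : Ideal.Quotient.mk sl2Ideal (X i) * a = 0) : a = 0 := by
  obtain ⟨F, rfl⟩ := Ideal.Quotient.mk_surjective a
  rw [← map_mul, Ideal.Quotient.eq_zero_iff_mem, sl2Ideal, Ideal.mem_span_singleton] at h
  obtain ⟨G, hG⟩ := h
  have hp : Prime (X i : MvPolynomial (Fin 4) ℂ) := X_prime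
  obtain ⟨G', rfl⟩ := (hp.dvd_or_dvd (Dvd.intro F hG)).resolve_left hi
  rw [Ideal.Quotient.eq_zero_iff_mem, sl2Ideal, Ideal.mem_span_singleton]
  refine ⟨G', mul_left_cancel₀ hp.ne_zero ?_⟩
  rw [hG]
  ring

lemma not_X_dvd (i : Fin 4) :
    ¬ (X i : MvPolynomial (Fin 4) ℂ) ∣ X 0 * X 3 - X 1 * X 2 - 1 := by
  rintro ⟨G, hG⟩
  have := congrArg (MvPolynomial.eval (fun _ => (0 : ℂ))) hG
  simp at this

lemma sx_mul_eq_zero (a : SL2R) (h : sx * a = 0) : a = 0 :=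
  mk_X_mul_eq_zero 0 (not_X_dvd 0) a h

lemma sy_mul_eq_zero (a : SL2R) (h : sy * a = 0) : a = 0 :=
  mk_X_mul_eq_zero 1 (not_X_dvd 1) a h

lemma sl2_rel : sx * sv = 1 + sy * su := by
  have h : Ideal.Quotient.mk sl2Ideal (X 0 * X 3 - X 1 * X 2 - 1) = 0 :=
    Ideal.Quotient.eq_zero_iff_mem.2 (Ideal.subset_span rfl)
  simp only [map_sub, map_mul, map_one] at h
  change sx * sv - sy * su - 1 = 0 at h
  linear_combination h

/-- The field `ℂ(x, y)`. -/
abbrev Kxy : Type := FractionRing (MvPolynomial (Fin 2) ℂ)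

/-- The variables of `ℂ[x, y]` as elements of `ℂ(x, y)`. -/
def kX (i : Fin 2) : Kxy := algebraMap (MvPolynomial (Fin 2) ℂ) Kxy (X i)

lemma kX_ne_zero (i : Fin 2) : kX i ≠ 0 := by
  simp [kX]

/-- The graded algebra map `A → ℂ(x, y)[T, T⁻¹]` with `x ↦ xT`, `y ↦ yT`, `u ↦ 0`, `v ↦ x⁻¹T⁻¹`;
the exponent of `T` records the weight, for which `x`, `y` have weight `1` and
`u`, `v` have weight `-1`. -/
def theta : SL2R →ₐ[ℂ] LaurentPolynomial Kxy :=
  Ideal.Quotient.liftₐ sl2Ideal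
    (aeval ![AddMonoidAlgebra.single 1 (kX 0), AddMonoidAlgebra.single 1 (kX 1), 0,
      AddMonoidAlgebra.single (-1) (kX 0)⁻¹]) (by
    intro a ha
    have : sl2Ideal ≤ RingHom.ker (aeval ![AddMonoidAlgebra.single 1 (kX 0),
        AddMonoidAlgebra.single 1 (kX 1), 0, AddMonoidAlgebra.single (-1) (kX 0)⁻¹] :
        MvPolynomial (Fin 4) ℂ →ₐ[ℂ] LaurentPolynomial Kxy) := by
      rw [sl2Ideal, Ideal.span_le, Set.singleton_subset_iff, SetLike.mem_coe, RingHom.mem_ker]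
      simp only [map_sub, map_mul, map_one, aeval_X]
      simp only [Matrix.cons_val, mul_zero, sub_zero, AddMonoidAlgebra.single_mul_single,
        mul_inv_cancel₀ (kX_ne_zero 0), add_neg_cancel, AddMonoidAlgebra.one_def, sub_self]
    exact this ha)

lemma theta_sx : theta sx = AddMonoidAlgebra.single 1 (kX 0) := by
  change (aeval _) (X 0) = _
  simp

lemma theta_sy : theta sy = AddMonoidAlgebra.single 1 (kX 1) := by
  change (aeval _) (X 1) = _
  simp

lemma theta_su : theta su = 0 := by
  change (aeval _) (X 2) = _
  simp

lemma theta_sv : theta sv = AddMonoidAlgebra.single (-1) (kX 0)⁻¹ := by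
  change (aeval _) (X 3) = _
  simp

/-- The map `ℂ[x, y] → A`. -/
def iota : MvPolynomial (Fin 2) ℂ →ₐ[ℂ] SL2R := aeval ![sx, sy]

lemma iota_monomial (e : Fin 2 →₀ ℕ) (r : ℂ) :
    iota (monomial e r) = r • (sx ^ e 0 * sy ^ e 1) := by
  rw [iota, aeval_monomial, Finsupp.prod_fintype _ _ (by simp)]
  simp only [Fin.prod_univ_two]
  exact (Algebra.smul_def _ _).symm

/-- The coefficient of `T ^ d` in the image of `R ∈ ℂ[x, y]` under `theta` is the homogeneous
component of `R` of degree `d`. -/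
lemma coeff_theta_iota (d : ℕ) (R : MvPolynomial (Fin 2) ℂ) :
    (theta (iota R)).coeff (d : ℤ) =
      algebraMap (MvPolynomial (Fin 2) ℂ) Kxy (homogeneousComponent d R) := by
  induction R using MvPolynomial.induction_on' with
  | add p q hp hq => simp [hp, hq]
  | monomial e r =>
    have hdeg : e.degree = e 0 + e 1 := by
      rw [Finsupp.degree_eq_sum, Fin.sum_univ_two]
    rw [iota_monomial, map_smul, map_mul, map_pow, map_pow, theta_sx, theta_sy,
      AddMonoidAlgebra.single_pow, AddMonoidAlgebra.single_pow,
      AddMonoidAlgebra.single_mul_single,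
      homogeneousComponent_of_mem (isHomogeneous_monomial r (rfl : e.degree = e.degree))]
    simp only [AddMonoidAlgebra.coeff_smul, AddMonoidAlgebra.coeff_single, Finsupp.smul_apply,
      Finsupp.single_apply, hdeg]
    by_cases h : d = e 0 + e 1
    · subst h
      have : (monomial e r : MvPolynomial (Fin 2) ℂ) = r • (X 0 ^ e 0 * X 1 ^ e 1) := by
        rw [monomial_eq, Finsupp.prod_fintype _ _ (by simp)]
        simp [Fin.prod_univ_two, smul_eq_C_mul]
      simp [this, kX, Algebra.smul_def, IsScalarTower.algebraMap_apply ℂ (MvPolynomial (Fin 2) ℂ) Kxy]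
    · have h' : ¬ ((e 0 : ℤ) + e 1 = d) := by omega
      simp [h, h']

/-- `x` and `y` are algebraically independent in `A`. -/
lemma iota_injective : Function.Injective iota := by
  rw [injective_iff_map_eq_zero]
  intro R hR
  rw [← sum_homogeneousComponent R]
  refine Finset.sum_eq_zero fun d _ => ?_
  have h := coeff_theta_iota d R
  rw [hR, map_zero] at h
  exact (FaithfulSMul.algebraMap_injective (MvPolynomial (Fin 2) ℂ) Kxy) (by simpa using h.symm)

/-! ### The weight filtration -/

/-- The span of the monomials `x^a y^b u^c v^d` of weight `a + b - c - d ≥ m`. -/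
def wt (m : ℤ) : Submodule ℂ SL2R :=
  Submodule.span ℂ {w | ∃ a b c d : ℕ, m ≤ (a : ℤ) + b - c - d ∧
    w = sx ^ a * sy ^ b * su ^ c * sv ^ d}

lemma mem_wt {m : ℤ} (a b c d : ℕ) (h : m ≤ (a : ℤ) + b - c - d) :
    sx ^ a * sy ^ b * su ^ c * sv ^ d ∈ wt m :=
  Submodule.subset_span ⟨a, b, c, d, h, rfl⟩

lemma wt_anti {m m' : ℤ} (h : m ≤ m') : wt m' ≤ wt m := by
  refine Submodule.span_le.2 ?_
  rintro w ⟨a, b, c, d, hw, rfl⟩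
  exact mem_wt a b c d (h.trans hw)

lemma wt_mul {m m' : ℤ} {p q : SL2R} (hp : p ∈ wt m) (hq : q ∈ wt m') : p * q ∈ wt (m + m') := by
  have : wt m * wt m' ≤ wt (m + m') := by
    rw [wt, wt, Submodule.span_mul_span]
    refine Submodule.span_le.2 ?_
    rintro _ ⟨_, ⟨a, b, c, d, hw, rfl⟩, _, ⟨a', b', c', d', hw', rfl⟩, rfl⟩
    have := mem_wt (m := m + m') (a + a') (b + b') (c + c') (d + d') (by push_cast; omega)
    convert! this using 1
    simp only [pow_add]
    ring
  exact this (Submodule.mul_mem_mul hp hq)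

/-- A polynomial in `x` and `y` lying in `wt m` has no monomials of degree less than `m`. -/
lemma iota_mem_span {m : ℕ} {R : MvPolynomial (Fin 2) ℂ} (h : iota R ∈ wt m) :
    iota R ∈ Submodule.span ℂ {a : SL2R | ∃ i j : ℕ, m ≤ i + j ∧ a = sx ^ i * sy ^ j} := by
  have key : ∀ w ∈ wt m, ∀ d : ℤ, d < m → (theta w).coeff d = 0 := by
    intro w hw d hd
    induction hw using Submodule.span_induction with
    | zero => simp
    | add p q _ _ hp hq => simp [hp, hq]
    | smul r p _ hp => simp [hp]
    | mem w hw =>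
      obtain ⟨a, b, c, e, hw, rfl⟩ := hw
      simp only [map_mul, map_pow, theta_sx, theta_sy, theta_su, theta_sv]
      rcases Nat.eq_zero_or_pos c with rfl | hc
      · rw [pow_zero, mul_one, AddMonoidAlgebra.single_pow, AddMonoidAlgebra.single_pow,
          AddMonoidAlgebra.single_pow, AddMonoidAlgebra.single_mul_single,
          AddMonoidAlgebra.single_mul_single, AddMonoidAlgebra.coeff_single,
          Finsupp.single_apply, if_neg]
        simp only [nsmul_eq_mul]
        push_cast at hw
        omega
      · simp [zero_pow hc.ne']
  rw [R.as_sum, map_sum]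
  refine Submodule.sum_mem _ fun e he => ?_
  rw [iota_monomial]
  refine Submodule.smul_mem _ _ (Submodule.subset_span ⟨e 0, e 1, ?_, rfl⟩)
  by_contra! hlt
  have hdeg : e.degree = e 0 + e 1 := by
    rw [Finsupp.degree_eq_sum, Fin.sum_univ_two]
  have h0 := key _ h (e.degree : ℤ) (by rw [hdeg]; exact_mod_cast hlt)
  rw [coeff_theta_iota] at h0
  have h1 : homogeneousComponent e.degree R = 0 :=
    (FaithfulSMul.algebraMap_injective (MvPolynomial (Fin 2) ℂ) Kxy) (by simpa using h0)
  have h2 := congrArg (coeff e) h1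
  rw [coeff_homogeneousComponent, if_pos rfl, coeff_zero] at h2
  exact (mem_support_iff.1 he) h2

/-! ### The kernel of the derivation -/

section
variable (D : Derivation ℂ SL2R SL2R)

lemma D_iota (hx : D sx = 0) (hy : D sy = 0) (R : MvPolynomial (Fin 2) ℂ) : D (iota R) = 0 := by
  induction R using MvPolynomial.induction_on with
  | C a => simp [iota]
  | add p q hp hq => simp [hp, hq]
  | mul_X p i hp =>
    rw [map_mul, Derivation.leibniz, hp]
    fin_cases i <;> simp [iota, hx, hy]

lemma D_eval₂ (hD : ∀ R, D (iota R) = 0) (s : SL2R) (p : Polynomial (MvPolynomial (Fin 2) ℂ)) :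
    D (p.eval₂ (iota : _ →+* SL2R) s) = p.derivative.eval₂ (iota : _ →+* SL2R) s * D s := by
  induction p using Polynomial.induction_on' with
  | add p q hp hq => simp [hp, hq, Polynomial.eval₂_add, add_mul]
  | monomial k r =>
    rw [Polynomial.derivative_monomial, Polynomial.eval₂_monomial, Polynomial.eval₂_monomial,
      Derivation.leibniz, Derivation.leibniz_pow]
    simp only [RingHom.coe_coe, hD, smul_eq_mul, map_mul, map_natCast, nsmul_eq_mul]
    ring

/-- If `D s` is a nonzerodivisor, then `s` is transcendental over `ℂ[x, y]`. -/
lemma eval₂_eq_zero (hD : ∀ R, D (iota R) = 0) (s : SL2R) (hs : ∀ a, D s * a = 0 → a = 0)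
    (p : Polynomial (MvPolynomial (Fin 2) ℂ)) (hp : p.eval₂ (iota : _ →+* SL2R) s = 0) :
    p = 0 := by
  induction hk : p.natDegree using Nat.strong_induction_on generalizing p with
  | _ k ih =>
  have hconst : p.natDegree = 0 := by
    by_contra hne
    have h1 := D_eval₂ D hD s p
    rw [hp, map_zero, mul_comm] at h1
    have h2 := ih _ (hk ▸ Polynomial.natDegree_derivative_lt hne) p.derivative (hs _ h1.symm) rfl
    exact hne (Polynomial.derivative_eq_zero.1 h2)
  rw [Polynomial.eq_C_of_natDegree_eq_zero hconst] at hp ⊢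
  rw [Polynomial.eval₂_C] at hp
  rw [iota_injective (by simpa using hp : iota (p.coeff 0) = iota 0), map_zero]

/-- The elements of `ℂ[x, y][s]` killed by `D` lie in `ℂ[x, y]`. -/
lemma eval₂_ker (hD : ∀ R, D (iota R) = 0) (s : SL2R) (hs : ∀ a, D s * a = 0 → a = 0)
    (p : Polynomial (MvPolynomial (Fin 2) ℂ)) (hp : D (p.eval₂ (iota : _ →+* SL2R) s) = 0) :
    ∃ R, p.eval₂ (iota : _ →+* SL2R) s = iota R := by
  rw [D_eval₂ D hD, mul_comm] at hp
  have h := eval₂_eq_zero D hD s hs _ (hs _ hp)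
  have h0 := Polynomial.derivative_eq_zero.1 h
  refine ⟨p.coeff 0, ?_⟩
  rw [Polynomial.eq_C_of_natDegree_eq_zero h0]
  simp

end

/-- If each of `x, y, u, v` lies in `S` after multiplication by `t ∈ S`, then every element of `A`
does so after multiplication by a power of `t`. -/
lemma exists_pow_mul_mem (S : Subring SL2R) (hS : ∀ r : ℂ, algebraMap ℂ SL2R r ∈ S) (t : SL2R)
    (ht : t ∈ S) (h : ∀ i, t * Ideal.Quotient.mk sl2Ideal (X i) ∈ S) (f : SL2R) :
    ∃ N : ℕ, t ^ N * f ∈ S := by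
  obtain ⟨F, rfl⟩ := Ideal.Quotient.mk_surjective f
  induction F using MvPolynomial.induction_on with
  | C a => exact ⟨0, by rw [pow_zero, one_mul]; exact hS a⟩
  | add p q hp hq =>
    obtain ⟨N, hN⟩ := hp
    obtain ⟨M, hM⟩ := hq
    refine ⟨N + M, ?_⟩
    have := S.add_mem (S.mul_mem (S.pow_mem ht M) hN) (S.mul_mem (S.pow_mem ht N) hM)
    convert! this using 1
    rw [map_add, pow_add]
    ring
  | mul_X p i hp =>
    obtain ⟨N, hN⟩ := hp
    refine ⟨N + 1, ?_⟩
    have := S.mul_mem hN (h i)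
    convert! this using 1
    rw [map_mul, pow_succ]
    ring

lemma pow_mul_cancel {t : SL2R} (ht : ∀ a, t * a = 0 → a = 0) (N : ℕ) {a b : SL2R}
    (h : t ^ N * a = t ^ N * b) : a = b := by
  induction N with
  | zero => simpa using h
  | succ N ih =>
    refine ih (sub_eq_zero.1 (ht _ ?_))
    rw [pow_succ] at h
    linear_combination h

/-- `ker D = ℂ[x, y]`. Since `A[1/x] = ℂ[x, y, 1/x][u]` and `A[1/y] = ℂ[x, y, 1/y][v]`, an element
of the kernel lies in `ℂ[x, y, 1/x] ∩ ℂ[x, y, 1/y]`. -/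
lemma exists_iota_of_D_eq_zero (D : Derivation ℂ SL2R SL2R)
    (hx : D sx = 0) (hy : D sy = 0) (hu : D su = sx) (hv : D sv = sy) (f : SL2R) (hf : D f = 0) :
    ∃ R, f = iota R := by
  have hD := D_iota D hx hy
  have hxi : iota (X 0) = sx := by simp [iota]
  have hyi : iota (X 1) = sy := by simp [iota]
  have main : ∀ s t : SL2R, D s = t → (∀ a, t * a = 0 → a = 0) → D t = 0 →
      (∃ r, iota r = t) → (∀ i, ∃ p : Polynomial (MvPolynomial (Fin 2) ℂ),
        p.eval₂ (iota : _ →+* SL2R) s = t * Ideal.Quotient.mk sl2Ideal (X i)) →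
      ∃ (N : ℕ) (R : _), t ^ N * f = iota R := by
    rintro s t hst hreg ht ⟨r, hr⟩ h
    obtain ⟨N, p, hp⟩ := exists_pow_mul_mem
      (Polynomial.eval₂RingHom (iota : MvPolynomial (Fin 2) ℂ →+* SL2R) s).range
      (fun c => ⟨Polynomial.C (C c), by simp [iota]⟩) t ⟨Polynomial.C r, by simp [hr]⟩ h f
    rw [Polynomial.coe_eval₂RingHom] at hp
    obtain ⟨R, hR⟩ := eval₂_ker D hD s (hst ▸ hreg) p (by
      rw [hp, Derivation.leibniz, Derivation.leibniz_pow, ht, hf]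
      simp)
    exact ⟨N, R, hp ▸ hR⟩
  obtain ⟨N, P, hP⟩ := main su sx hu sx_mul_eq_zero hx ⟨X 0, hxi⟩ (by
    intro i
    fin_cases i
    · exact ⟨Polynomial.C (X 0 * X 0), by simp [hxi, sx]⟩
    · exact ⟨Polynomial.C (X 0 * X 1), by simp [hxi, hyi, sy]⟩
    · exact ⟨Polynomial.C (X 0) * Polynomial.X, by
        rw [Polynomial.eval₂_mul, Polynomial.eval₂_C, Polynomial.eval₂_X]; simp [hxi, su]⟩
    · refine ⟨1 + Polynomial.C (X 1) * Polynomial.X, ?_⟩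
      rw [Polynomial.eval₂_add, Polynomial.eval₂_mul, Polynomial.eval₂_C, Polynomial.eval₂_X,
        Polynomial.eval₂_one]
      refine (?_ : _ = sx * sv)
      rw [sl2_rel, RingHom.coe_coe, hyi])
  obtain ⟨M, Q, hQ⟩ := main sv sy hv sy_mul_eq_zero hy ⟨X 1, hyi⟩ (by
    intro i
    fin_cases i
    · exact ⟨Polynomial.C (X 1 * X 0), by simp [hxi, hyi, sx]⟩
    · exact ⟨Polynomial.C (X 1 * X 1), by simp [hyi, sy]⟩
    · refine ⟨Polynomial.C (X 0) * Polynomial.X - 1, ?_⟩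
      rw [Polynomial.eval₂_sub, Polynomial.eval₂_mul, Polynomial.eval₂_C, Polynomial.eval₂_X,
        Polynomial.eval₂_one]
      refine (?_ : _ = sy * su)
      have := sl2_rel
      simp only [RingHom.coe_coe, hxi]
      linear_combination this
    · exact ⟨Polynomial.C (X 1) * Polynomial.X, by
        rw [Polynomial.eval₂_mul, Polynomial.eval₂_C, Polynomial.eval₂_X]; simp [hyi, sv]⟩)
  have hPQ : X 1 ^ M * P = X 0 ^ N * Q := by
    apply iota_injective
    rw [map_mul, map_mul, map_pow, map_pow, hxi, hyi, ← hP, ← hQ]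
    ring
  have hdvd : (X 0 : MvPolynomial (Fin 2) ℂ) ^ N ∣ P := by
    refine (X_prime (R := ℂ) (i := (0 : Fin 2))).pow_dvd_of_dvd_mul_left N ?_ (Dvd.intro Q hPQ.symm)
    intro h
    have h' := (X_prime (R := ℂ) (i := (0 : Fin 2))).dvd_of_dvd_pow h
    rw [X_dvd_X] at h'
    simp at h'
  obtain ⟨R, rfl⟩ := hdvd
  refine ⟨R, pow_mul_cancel sx_mul_eq_zero N ?_⟩
  rw [hP, map_mul, map_pow, hxi]

/-! ### Iterates of the derivation -/

section
variable (D : Derivation ℂ SL2R SL2R)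

lemma iterate_eq_pow (k : ℕ) (a : SL2R) : (⇑D)^[k] a = ((D : SL2R →ₗ[ℂ] SL2R) ^ k) a := by
  rw [Module.End.pow_apply]
  rfl

lemma iterate_zero_arg (k : ℕ) : (⇑D)^[k] 0 = 0 := by
  rw [iterate_eq_pow, map_zero]

lemma iterate_mono {k l : ℕ} (h : k ≤ l) {a : SL2R} (ha : (⇑D)^[k] a = 0) : (⇑D)^[l] a = 0 := by
  obtain ⟨m, rfl⟩ := Nat.exists_eq_add_of_le h
  rw [add_comm, Function.iterate_add_apply, ha, iterate_zero_arg]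

/-- The `D`-degree is subadditive under multiplication. -/
lemma iterate_mul_eq_zero (N : ℕ) : ∀ (k l : ℕ) (a b : SL2R), k + l ≤ N + 1 →
    (⇑D)^[k] a = 0 → (⇑D)^[l] b = 0 → (⇑D)^[N] (a * b) = 0 := by
  induction N with
  | zero =>
    intro k l a b h ha hb
    have : k = 0 ∨ l = 0 := by omega
    rcases this with rfl | rfl
    · simp_all
    · simp_all
  | succ N ih =>
    intro k l a b h ha hb
    rcases k with _ | k
    · simp only [Function.iterate_zero, id] at ha
      rw [ha, zero_mul, iterate_zero_arg]
    rcases l with _ | l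
    · simp only [Function.iterate_zero, id] at hb
      rw [hb, mul_zero, iterate_zero_arg]
    rw [Function.iterate_succ_apply, Derivation.leibniz, iterate_eq_pow, map_add,
      ← iterate_eq_pow, ← iterate_eq_pow, smul_eq_mul, smul_eq_mul,
      ih (k + 1) l a (D b) (by omega) ha hb, ih (l + 1) k b (D a) (by omega) hb ha, add_zero]

/-- Leibniz rule for a factor `b` with `D² b = 0`. -/
lemma iterate_succ_mul (a b : SL2R) (hb : D (D b) = 0) (N : ℕ) :
    (⇑D)^[N + 1] (a * b) = (⇑D)^[N + 1] a * b + (N + 1 : ℂ) • ((⇑D)^[N] a * D b) := by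
  induction N with
  | zero => simp [add_comm, mul_comm]
  | succ N ih =>
    rw [Function.iterate_succ_apply', ih, map_add, Derivation.leibniz, D.map_smul,
      Derivation.leibniz, hb, ← Function.iterate_succ_apply' D, ← Function.iterate_succ_apply' D]
    simp only [smul_eq_mul, mul_zero, zero_add, Nat.cast_add, Nat.cast_one, add_smul, one_smul,
      Nat.succ_eq_add_one, mul_comm (D b), mul_comm b]
    abel

lemma D_wt (hx : D sx = 0) (hy : D sy = 0) (hu : D su = sx) (hv : D sv = sy) {m : ℤ} {w : SL2R}
    (hw : w ∈ wt m) : D w ∈ wt (m + 2) := by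
  induction hw using Submodule.span_induction with
  | zero => simp
  | add p q _ _ hp hq => rw [map_add]; exact Submodule.add_mem _ hp hq
  | smul r p _ hp => rw [D.map_smul]; exact Submodule.smul_mem _ _ hp
  | mem w hw =>
    obtain ⟨a, b, c, d, hw, rfl⟩ := hw
    have h : D (sx ^ a * sy ^ b * su ^ c * sv ^ d) =
        c • (sx ^ (a + 1) * sy ^ b * su ^ (c - 1) * sv ^ d) +
        d • (sx ^ a * sy ^ (b + 1) * su ^ c * sv ^ (d - 1)) := by
      simp only [Derivation.leibniz, Derivation.leibniz_pow, hx, hy, hu, hv, smul_eq_mul,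
        nsmul_eq_mul]
      ring
    rw [h]
    refine Submodule.add_mem _ ?_ ?_
    · rcases Nat.eq_zero_or_pos c with rfl | hc
      · simp
      · exact Submodule.smul_of_tower_mem _ _ (mem_wt _ _ _ _ (by push_cast [hc]; omega))
    · rcases Nat.eq_zero_or_pos d with rfl | hd
      · simp
      · exact Submodule.smul_of_tower_mem _ _ (mem_wt _ _ _ _ (by push_cast [hd]; omega))

lemma iterate_wt (hx : D sx = 0) (hy : D sy = 0) (hu : D su = sx) (hv : D sv = sy) {m : ℤ}
    {w : SL2R} (hw : w ∈ wt m) (k : ℕ) : (⇑D)^[k] w ∈ wt (m + 2 * k) := by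
  induction k with
  | zero => simpa using hw
  | succ k ih =>
    rw [Function.iterate_succ_apply']
    convert! D_wt D hx hy hu hv ih using 2
    push_cast
    ring

/-! ### The algebra `B_n` -/

lemma sx_mem (n : ℕ) : sx ∈ Bn n := Algebra.subset_adjoin (by simp)
lemma sy_mem (n : ℕ) : sy ∈ Bn n := Algebra.subset_adjoin (by simp)
lemma xu_mem (n : ℕ) : sx ^ (n + 1) * su ∈ Bn n := Algebra.subset_adjoin (by simp)
lemma xyv_mem (n i j : ℕ) (h : i + j = n + 1) : sx ^ i * sy ^ j * sv ∈ Bn n :=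
  Algebra.subset_adjoin (Or.inr ⟨i, by omega, by rw [← h, Nat.add_sub_cancel_left]⟩)

lemma D_stable (n : ℕ) (hx : D sx = 0) (hy : D sy = 0) (hu : D su = sx) (hv : D sv = sy)
    (b : SL2R) (hb : b ∈ Bn n) : D b ∈ Bn n := by
  induction hb using Algebra.adjoin_induction with
  | algebraMap r => simp
  | add p q _ _ hp hq => rw [map_add]; exact add_mem hp hq
  | mul p q hp' hq' hp hq =>
    rw [Derivation.leibniz]
    exact add_mem (mul_mem hp' hq) (mul_mem hq' hp)
  | mem w hw =>
    rcases hw with (rfl | rfl | rfl) | ⟨i, hi, rfl⟩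
    · rw [hx]; exact zero_mem _
    · rw [hy]; exact zero_mem _
    · simp only [Derivation.leibniz, Derivation.leibniz_pow, hx, hu, smul_eq_mul, mul_zero,
        smul_zero, add_zero]
      exact mul_mem (pow_mem (sx_mem n) _) (sx_mem n)
    · simp only [Derivation.leibniz, Derivation.leibniz_pow, hx, hy, hv, smul_eq_mul, mul_zero,
        smul_zero, add_zero]
      exact mul_mem (mul_mem (pow_mem (sx_mem n) _) (pow_mem (sy_mem n) _)) (sy_mem n)

/-- `B_n` is spanned by products of generators, and a product with `k` factors outside `{x, y}`
has `D`-degree at most `k` and weight at least `n * k`. -/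
lemma Bn_le (n : ℕ) (hx : D sx = 0) (hy : D sy = 0) (hu : D su = sx) (hv : D sv = sy) :
    Subalgebra.toSubmodule (Bn n) ≤
      Submodule.span ℂ {a | ∃ k : ℕ, (⇑D)^[k + 1] a = 0 ∧ a ∈ wt (n * k)} := by
  rw [Bn, Algebra.adjoin_eq_span]
  refine Submodule.span_mono ?_
  intro a ha
  induction ha using Submonoid.closure_induction with
  | one => exact ⟨0, by simp, by simpa using mem_wt (m := 0) 0 0 0 0 (by simp)⟩
  | mul a b _ _ ha hb =>
    obtain ⟨k, hk, hk'⟩ := ha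
    obtain ⟨l, hl, hl'⟩ := hb
    refine ⟨k + l, iterate_mul_eq_zero D _ _ _ a b (by omega) hk hl, ?_⟩
    convert! wt_mul hk' hl' using 2
    push_cast
    ring
  | mem w hw =>
    rcases hw with (rfl | rfl | rfl) | ⟨i, hi, rfl⟩
    · exact ⟨0, by simpa using hx, by simpa using mem_wt (m := 0) 1 0 0 0 (by simp)⟩
    · exact ⟨0, by simpa using hy, by simpa using mem_wt (m := 0) 0 1 0 0 (by simp)⟩
    · refine ⟨1, ?_, by simpa using mem_wt (m := n) (n + 1) 0 1 0 (by simp)⟩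
      simp [hx, hu]
    · refine ⟨1, ?_, by simpa using mem_wt (m := n) i (n + 1 - i) 0 1 (by push_cast [hi]; omega)⟩
      simp [hx, hy, hv]

/-- Every monomial of degree `n + 2` is `D b` for some `b ∈ B_n`. -/
lemma exists_D_eq (n i j : ℕ) (h : i + j = n + 2)
    (hx : D sx = 0) (hy : D sy = 0) (hu : D su = sx) (hv : D sv = sy) :
    ∃ b ∈ Bn n, D b = sx ^ i * sy ^ j := by
  rcases j with _ | j
  · obtain rfl : i = n + 2 := by omega
    exact ⟨_, xu_mem n, by simp [hx, hu]; ring⟩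
  · exact ⟨_, xyv_mem n i j (by omega), by simp [hx, hy, hv]; ring⟩

lemma exists_iterate_eq (n : ℕ)
    (hx : D sx = 0) (hy : D sy = 0) (hu : D su = sx) (hv : D sv = sy) (ν : ℕ) :
    ∀ i j : ℕ, (n + 2) * ν ≤ i + j → ∃ c ∈ Bn n, (⇑D)^[ν] c = sx ^ i * sy ^ j := by
  have hxy : ∀ i j : ℕ, D (sx ^ i * sy ^ j) = 0 := fun i j => by
    simp [hx, hy]
  induction ν with
  | zero => exact fun i j _ => ⟨_, mul_mem (pow_mem (sx_mem n) i) (pow_mem (sy_mem n) j), rfl⟩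
  | succ ν ih =>
    intro i j h
    -- Split off a factor `x^i₁ y^j₁` of degree exactly `n + 2`.
    obtain ⟨i₁, j₁, i₂, j₂, rfl, rfl, h₁⟩ :
        ∃ i₁ j₁ i₂ j₂, i = i₁ + i₂ ∧ j = j₁ + j₂ ∧ i₁ + j₁ = n + 2 := by
      have : n + 2 ≤ i + j := le_trans (by nlinarith) h
      refine ⟨min i (n + 2), n + 2 - min i (n + 2), i - min i (n + 2),
        j - (n + 2 - min i (n + 2)), ?_, ?_, ?_⟩ <;> omega
    obtain ⟨c, hc, hc'⟩ := ih i₂ j₂ (by rw [mul_add] at h; omega)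
    obtain ⟨b, hb, hb'⟩ := exists_D_eq D n i₁ j₁ h₁ hx hy hu hv
    have hne : ((ν : ℂ) + 1) ≠ 0 := by exact_mod_cast Nat.succ_ne_zero ν
    refine ⟨((ν : ℂ) + 1)⁻¹ • (c * b), Subalgebra.smul_mem _ (mul_mem hc hb) _, ?_⟩
    rw [iterate_eq_pow, map_smul, ← iterate_eq_pow, iterate_succ_mul D c b (by rw [hb', hxy]),
      Function.iterate_succ_apply', hc', hxy, hb', zero_mul, zero_add, smul_smul,
      inv_mul_cancel₀ hne, one_smul]
    ring

end

/-- For `n ≥ 1`, the subalgebra `B_n ⊆ A` is `D`-stable and for every `ν`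
the set `m_ν(B_n) = D^ν(B_n ∩ ker D^{ν+1})` equals the ℂ-linear span of the monomials
`x^i y^j` with `i + j ≥ (n+2)ν`, i.e. the ideal `⟨x,y⟩^{(n+2)ν}` of `ℂ[x,y] = ker D`. -/
theorem stmt10 (n : ℕ) (hn : 1 ≤ n) (D : Derivation ℂ SL2R SL2R)
    (hx : D sx = 0) (hy : D sy = 0) (hu : D su = sx) (hv : D sv = sy) (ν : ℕ) :
    (∀ b ∈ Bn n, D b ∈ Bn n) ∧
    {s : SL2R | ∃ c ∈ Bn n, (⇑D)^[ν + 1] c = 0 ∧ (⇑D)^[ν] c = s} =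
      ↑(Submodule.span ℂ {a : SL2R | ∃ i j : ℕ,
          (n + 2) * ν ≤ i + j ∧ a = sx ^ i * sy ^ j}) := by
  refine ⟨D_stable D n hx hy hu hv, Set.Subset.antisymm ?_ ?_⟩
  · rintro s ⟨c, hc, hc0, rfl⟩
    rw [Function.iterate_succ_apply'] at hc0
    obtain ⟨R, hR⟩ := exists_iota_of_D_eq_zero D hx hy hu hv _ hc0
    -- Summands of `D`-degree less than `ν` are killed; the others have weight at least `n * ν`.
    have hsplit : c ∈ LinearMap.ker ((D : SL2R →ₗ[ℂ] SL2R) ^ ν) ⊔ wt (n * ν) := by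
      refine Submodule.span_le.2 ?_ (Bn_le D n hx hy hu hv hc)
      rintro a ⟨k, hk, hk'⟩
      rcases lt_or_ge k ν with hlt | hge
      · refine Submodule.mem_sup_left ?_
        rw [LinearMap.mem_ker, ← iterate_eq_pow]
        exact iterate_mono D hlt hk
      · refine Submodule.mem_sup_right (wt_anti ?_ hk')
        exact_mod_cast Nat.mul_le_mul_left n hge
    obtain ⟨c₁, h₁, c₂, h₂, rfl⟩ := Submodule.mem_sup.1 hsplit
    rw [LinearMap.mem_ker, ← iterate_eq_pow] at h₁
    have heq : (⇑D)^[ν] (c₁ + c₂) = (⇑D)^[ν] c₂ := by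
      rw [iterate_eq_pow, map_add, ← iterate_eq_pow, ← iterate_eq_pow, h₁, zero_add]
    have hwt : (⇑D)^[ν] (c₁ + c₂) ∈ wt (((n + 2) * ν : ℕ) : ℤ) := by
      rw [heq]
      convert! iterate_wt D hx hy hu hv h₂ ν using 2
      push_cast
      ring
    rw [hR] at hwt ⊢
    exact iota_mem_span hwt
  · intro s hs
    rw [SetLike.mem_coe] at hs
    suffices h : ∃ c ∈ Bn n, (⇑D)^[ν] c = s ∧ D s = 0 by
      obtain ⟨c, hc, h1, h2⟩ := h
      exact ⟨c, hc, by rw [Function.iterate_succ_apply', h1, h2], h1⟩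
    induction hs using Submodule.span_induction with
    | zero => exact ⟨0, zero_mem _, iterate_zero_arg D ν, map_zero D⟩
    | add p q _ _ hp hq =>
      obtain ⟨c, hc, h1, h2⟩ := hp
      obtain ⟨c', hc', h1', h2'⟩ := hq
      refine ⟨c + c', add_mem hc hc', ?_, by rw [map_add, h2, h2', add_zero]⟩
      rw [iterate_eq_pow, map_add, ← iterate_eq_pow, ← iterate_eq_pow, h1, h1']
    | smul r p _ hp =>
      obtain ⟨c, hc, h1, h2⟩ := hp
      refine ⟨r • c, Subalgebra.smul_mem _ hc r, ?_, by rw [D.map_smul, h2, smul_zero]⟩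
      rw [iterate_eq_pow, map_smul, ← iterate_eq_pow, h1]
    | mem w hw =>
      obtain ⟨i, j, hij, rfl⟩ := hw
      obtain ⟨c, hc, h⟩ := exists_iterate_eq D n hx hy hu hv ν i j hij
      exact ⟨c, hc, h, by simp [hx, hy]⟩

end
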